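/- Under the Algorithm-1 multiplicative-weights setup, suppose: expert i belongs to S_τ for every τ ∈ {i, …, t} with t + 1 ≤ T; its lifespan satisfies l_i/4 ≤ t − i ≤ l_i; and √(log T / l_i) ≤ 1/2 (so η_i = (1/(GD))·√(log T / l_i)). Then the regret of the played points against expert i's predictions satisfies ∑_{τ=i}^{t} (ℓ_τ(x_τ) − ℓ_τ(x_τ^{(i)})) ≤ 3·G·D·√(log T · (t − i)). Consequently, if the expert additionally guarantees ∑_{τ=i}^{t} ℓ_τ(x_τ^{(i)}) − min_{x ∈ K} ∑_{τ=i}^{t} ℓ_τ(x) ≤ 3·G·D·√(t − i), then ∑_{τ=i}^{t} ℓ_τ(x_τ) − min_{x ∈ K} ∑_{τ=i}^{t} ℓ_τ(x) ≤ 3·G·D·√(t − i) + 3·G·D·√(log T·(t − i)). -/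

import Mathlib

/-!
Divide each weight by the learning rate of its expert. The resulting potential `∑ j, w τ j / η j`
starts at `1`. Convexity of the losses makes a multiplicative update non-increasing, since the
weighted regrets sum to at most `0`, and each newborn expert contributes exactly `1`; hence the
potential at time `τ` is at most `τ`. On the other hand the share of an expert `i` is the product
of its factors `1 + η i * r`, and `log (1 + z) ≥ z - z²` for `|z| ≤ 1 / 2` turns the bound on this
product into the second-order regret bound `η i * ∑ r ≤ log t + ∑ (η i * r)²`. With
`η i = √(log T / l) / B` and `l` within a factor `4` of `t - i`, this gives a regret of order
`B * √(log T * (t - i))`. When the cap `1 / 2` is active in the learning rate, the interval is so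
short that the trivial bound `B` per round suffices.
-/

section RealInequalities

lemma abs_log_one_add_sub_self_le_sq {x : ℝ} (hx : |x| ≤ 1 / 2) :
    |Real.log (1 + x) - x| ≤ x ^ 2 := by
  have hnorm : ‖(x : ℂ)‖ ≤ 1 / 2 := by rwa [Complex.norm_real, Real.norm_eq_abs]
  have hpos : 0 ≤ 1 + x := by linarith [(abs_le.mp hx).1]
  have hinv : (1 - ‖(x : ℂ)‖)⁻¹ ≤ 2 := inv_le_of_inv_le₀ (by norm_num) (by linarith)
  calc |Real.log (1 + x) - x| = ‖Complex.log (1 + x) - x‖ := by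
        rw [← Real.norm_eq_abs, ← Complex.norm_real]
        push_cast [Complex.ofReal_log hpos]
        rfl
    _ ≤ ‖(x : ℂ)‖ ^ 2 * (1 - ‖(x : ℂ)‖)⁻¹ / 2 :=
        Complex.norm_log_one_add_sub_self_le (by linarith)
    _ ≤ ‖(x : ℂ)‖ ^ 2 * 2 / 2 := by gcongr
    _ = x ^ 2 := by
        rw [Complex.norm_real, Real.norm_eq_abs, sq_abs, mul_div_cancel_right₀ _ two_ne_zero]

lemma add_add_one_le_three_mul_sqrt_mul {l n : ℝ} (hn : 1 ≤ n) (hlo : l / 4 ≤ n) (hhi : n ≤ l) :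
    l + (n + 1) ≤ 3 * √(l * n) := by
  have hl_sq : √l ^ 2 = l := Real.sq_sqrt (by linarith)
  have hn_sq : √n ^ 2 = n := Real.sq_sqrt (by linarith)
  have hle : √n ≤ √l := Real.sqrt_le_sqrt hhi
  have hle_two : √l ≤ 2 * √n := Real.sqrt_le_iff.mpr ⟨by positivity, by linarith [mul_pow 2 √n 2]⟩
  rw [Real.sqrt_mul (by linarith)]
  nlinarith [mul_nonneg (sub_nonneg.mpr hle) (sub_nonneg.mpr hle_two)]

lemma add_one_le_three_mul_sqrt_mul {L n : ℝ} (hn : 1 ≤ n) (hL : Real.log 2 ≤ L)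
    (hnL : n ≤ 4 * L) : n + 1 ≤ 3 * √(L * n) := by
  have hL' : 0.69 ≤ L := by linarith [Real.log_two_gt_d9]
  suffices hsq : ((n + 1) / 3) ^ 2 ≤ L * n by linarith [Real.le_sqrt_of_sq_le hsq]
  nlinarith [mul_nonneg (sub_nonneg.mpr hn) (sub_nonneg.mpr hL'),
    mul_nonneg (sub_nonneg.mpr hnL) (by linarith : 0 ≤ n)]

end RealInequalities

section LifespanRate

/-- The learning rate that Algorithm 1 gives to an expert of lifespan `l` when the horizon is `T`
and losses oscillate by at most `B` (`G * D` in the paper). -/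
noncomputable def lifespanRate (B : ℝ) (T : ℕ) (l : ℝ) : ℝ :=
  1 / B * min (1 / 2) √(Real.log T / l)

variable {B l : ℝ} {T : ℕ}

lemma lifespanRate_mul (hB : B ≠ 0) :
    lifespanRate B T l * B = min (1 / 2) √(Real.log T / l) := by
  rw [lifespanRate]
  field_simp

lemma lifespanRate_mul_le_half (hB : B ≠ 0) : lifespanRate B T l * B ≤ 1 / 2 :=
  (lifespanRate_mul hB).trans_le (min_le_left _ _)

lemma lifespanRate_pos (hB : 0 < B) (hT : 2 ≤ T) (hl : 0 < l) : 0 < lifespanRate B T l := by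
  have hlog : 0 < Real.log T := Real.log_pos (by exact_mod_cast hT)
  exact mul_pos (one_div_pos.mpr hB)
    (lt_min one_half_pos (Real.sqrt_pos.mpr (div_pos hlog hl)))

end LifespanRate

section MultiplicativeWeights

open Finset

variable {E : Type*}

/-- The regret incurred in round `τ` for playing `x τ` instead of the prediction `y τ j` of
expert `j`. -/
def roundRegret (ℓ : ℕ → E → ℝ) (x : ℕ → E) (y : ℕ → ℕ → E) (τ j : ℕ) : ℝ :=
  ℓ τ (x τ) - ℓ τ (y τ j)

/-- The total weight of the active experts in round `τ`, each measured in units of its initial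
weight `η j`. -/
noncomputable def relativeWeight (S : ℕ → Finset ℕ) (η : ℕ → ℝ) (w : ℕ → ℕ → ℝ) (τ : ℕ) : ℝ :=
  ∑ j ∈ S τ, w τ j / η j

variable [AddCommGroup E] [Module ℝ E]

/-- A run of multiplicative weights over `T` rounds with a growing pool of experts, as in
Algorithm 1: expert `j` is born in round `j`, belongs to the active set `S τ` for as long as it
lives, predicts `y τ j` and has weight `w τ j`, while `x τ` is the played point. The learning rates
`η` are arbitrary up to the requirement that every update factor be at least `1 / 2`. -/
structure IsMultiplicativeWeightsRun (K : Set E) (ℓ : ℕ → E → ℝ) (B : ℝ) (T : ℕ)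
    (S : ℕ → Finset ℕ) (η : ℕ → ℝ) (y : ℕ → ℕ → E) (w : ℕ → ℕ → ℝ) (x : ℕ → E) : Prop where
  convex : Convex ℝ K
  convexOn_loss : ∀ τ ∈ Icc 1 T, ConvexOn ℝ K (ℓ τ)
  abs_loss_sub_le : ∀ τ ∈ Icc 1 T, ∀ u ∈ K, ∀ v ∈ K, |ℓ τ u - ℓ τ v| ≤ B
  active_subset : ∀ τ, S τ ⊆ Icc 1 τ
  self_mem_active : ∀ τ ∈ Icc 1 T, τ ∈ S τ
  active_succ_subset : ∀ τ, S (τ + 1) ⊆ S τ ∪ {τ + 1}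
  rate_pos : ∀ j, 0 < η j
  rate_mul_le_half : ∀ j, η j * B ≤ 1 / 2
  prediction_mem : ∀ τ, ∀ j ∈ S τ, y τ j ∈ K
  played_eq : ∀ τ, x τ = (∑ j ∈ S τ, w τ j)⁻¹ • ∑ j ∈ S τ, w τ j • y τ j
  weight_self : ∀ j, w j j = η j
  weight_succ : ∀ τ, ∀ j ∈ S τ, j ∈ S (τ + 1) →
    w (τ + 1) j = w τ j * (1 + η j * roundRegret ℓ x y τ j)

namespace IsMultiplicativeWeightsRun

variable {K : Set E} {ℓ : ℕ → E → ℝ} {B : ℝ} {T : ℕ} {S : ℕ → Finset ℕ} {η : ℕ → ℝ}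
  {y : ℕ → ℕ → E} {w : ℕ → ℕ → ℝ} {x : ℕ → E} {τ i j s t : ℕ}

lemma active_one (h : IsMultiplicativeWeightsRun K ℓ B T S η y w x) (hT : 1 ≤ T) : S 1 = {1} :=
  (h.active_subset 1).antisymm (by simpa using h.self_mem_active 1 (by simpa using hT))

lemma erase_active_succ_subset (h : IsMultiplicativeWeightsRun K ℓ B T S η y w x) (τ : ℕ) :
    (S (τ + 1)).erase (τ + 1) ⊆ S τ := by
  rw [← subset_insert_iff, insert_eq, union_comm]
  exact h.active_succ_subset τ

lemma played_eq_centerMass (h : IsMultiplicativeWeightsRun K ℓ B T S η y w x) (τ : ℕ) :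
    x τ = (S τ).centerMass (w τ) (y τ) :=
  h.played_eq τ

lemma sum_weight_pos (h : IsMultiplicativeWeightsRun K ℓ B T S η y w x) (hτ : τ ∈ Icc 1 T)
    (hw : ∀ j ∈ S τ, 0 < w τ j) : 0 < ∑ j ∈ S τ, w τ j :=
  sum_pos hw ⟨τ, h.self_mem_active τ hτ⟩

lemma played_mem_of_weight_pos (h : IsMultiplicativeWeightsRun K ℓ B T S η y w x)
    (hτ : τ ∈ Icc 1 T) (hw : ∀ j ∈ S τ, 0 < w τ j) : x τ ∈ K := by
  rw [h.played_eq_centerMass]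
  exact h.convex.centerMass_mem (fun j hj ↦ (hw j hj).le) (h.sum_weight_pos hτ hw)
    (h.prediction_mem τ)

lemma abs_rate_mul_roundRegret_le_half_of_played_mem
    (h : IsMultiplicativeWeightsRun K ℓ B T S η y w x) (hτ : τ ∈ Icc 1 T) (hx : x τ ∈ K)
    (hj : j ∈ S τ) : |η j * roundRegret ℓ x y τ j| ≤ 1 / 2 := by
  rw [abs_mul, abs_of_pos (h.rate_pos j)]
  exact (mul_le_mul_of_nonneg_left (h.abs_loss_sub_le τ hτ _ hx _ (h.prediction_mem τ j hj))
    (h.rate_pos j).le).trans (h.rate_mul_le_half j)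

-- Positivity of the weights and membership of the played point in `K` can only be proved together:
-- the point is a convex combination if the weights are positive, and the oscillation bound that
-- keeps the next weights positive holds only on `K`.
lemma weight_pos (h : IsMultiplicativeWeightsRun K ℓ B T S η y w x) (hτ : τ ∈ Icc 1 T) :
    ∀ j ∈ S τ, 0 < w τ j := by
  obtain ⟨h_one, hT⟩ := mem_Icc.mp hτ
  induction τ, h_one using Nat.le_induction with
  | base => simp [h.active_one hT, h.weight_self, h.rate_pos]
  | succ τ h_one ih =>
    have hτ' : τ ∈ Icc 1 T := mem_Icc.mpr ⟨h_one, by lia⟩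
    have hw := ih hτ' (by lia)
    intro j hj
    rcases eq_or_ne j (τ + 1) with rfl | hne
    · exact h.weight_self _ ▸ h.rate_pos _
    · have hj' : j ∈ S τ := h.erase_active_succ_subset τ (mem_erase.mpr ⟨hne, hj⟩)
      have hbound := h.abs_rate_mul_roundRegret_le_half_of_played_mem hτ'
        (h.played_mem_of_weight_pos hτ' hw) hj'
      rw [h.weight_succ τ j hj' hj]
      exact mul_pos (hw j hj') (by linarith [(abs_le.mp hbound).1])

lemma played_mem (h : IsMultiplicativeWeightsRun K ℓ B T S η y w x) (hτ : τ ∈ Icc 1 T) :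
    x τ ∈ K :=
  h.played_mem_of_weight_pos hτ (h.weight_pos hτ)

lemma abs_roundRegret_le (h : IsMultiplicativeWeightsRun K ℓ B T S η y w x) (hτ : τ ∈ Icc 1 T)
    (hj : j ∈ S τ) : |roundRegret ℓ x y τ j| ≤ B :=
  h.abs_loss_sub_le τ hτ _ (h.played_mem hτ) _ (h.prediction_mem τ j hj)

lemma abs_rate_mul_roundRegret_le_half (h : IsMultiplicativeWeightsRun K ℓ B T S η y w x)
    (hτ : τ ∈ Icc 1 T) (hj : j ∈ S τ) : |η j * roundRegret ℓ x y τ j| ≤ 1 / 2 :=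
  h.abs_rate_mul_roundRegret_le_half_of_played_mem hτ (h.played_mem hτ) hj

lemma one_add_rate_mul_roundRegret_pos (h : IsMultiplicativeWeightsRun K ℓ B T S η y w x)
    (hτ : τ ∈ Icc 1 T) (hj : j ∈ S τ) : 0 < 1 + η j * roundRegret ℓ x y τ j := by
  linarith [(abs_le.mp (h.abs_rate_mul_roundRegret_le_half hτ hj)).1]

lemma updated_relativeWeight_nonneg (h : IsMultiplicativeWeightsRun K ℓ B T S η y w x)
    (hτ : τ ∈ Icc 1 T) (hj : j ∈ S τ) :
    0 ≤ w τ j / η j * (1 + η j * roundRegret ℓ x y τ j) :=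
  mul_nonneg (div_nonneg (h.weight_pos hτ j hj).le (h.rate_pos j).le)
    (h.one_add_rate_mul_roundRegret_pos hτ hj).le

lemma sum_weight_mul_roundRegret_nonpos (h : IsMultiplicativeWeightsRun K ℓ B T S η y w x)
    (hτ : τ ∈ Icc 1 T) : ∑ j ∈ S τ, w τ j * roundRegret ℓ x y τ j ≤ 0 := by
  have hsum := h.sum_weight_pos hτ (h.weight_pos hτ)
  have jensen := (h.convexOn_loss τ hτ).map_centerMass_le
    (fun j hj ↦ (h.weight_pos hτ j hj).le) hsum (h.prediction_mem τ)
  rw [← h.played_eq_centerMass, centerMass, smul_eq_mul, inv_mul_eq_div, le_div_iff₀ hsum] at jensen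
  simp only [smul_eq_mul, Function.comp_apply] at jensen
  simp only [roundRegret, mul_sub, sum_sub_distrib, ← sum_mul]
  linarith

lemma sum_updated_relativeWeight_le (h : IsMultiplicativeWeightsRun K ℓ B T S η y w x)
    (hτ : τ ∈ Icc 1 T) :
    ∑ j ∈ S τ, w τ j / η j * (1 + η j * roundRegret ℓ x y τ j) ≤ relativeWeight S η w τ := by
  calc ∑ j ∈ S τ, w τ j / η j * (1 + η j * roundRegret ℓ x y τ j)
      = ∑ j ∈ S τ, (w τ j / η j + w τ j * roundRegret ℓ x y τ j) := by
        refine sum_congr rfl fun j _ ↦ ?_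
        have := (h.rate_pos j).ne'
        field_simp
    _ = relativeWeight S η w τ + ∑ j ∈ S τ, w τ j * roundRegret ℓ x y τ j := sum_add_distrib
    _ ≤ relativeWeight S η w τ := by linarith [h.sum_weight_mul_roundRegret_nonpos hτ]

lemma relativeWeight_succ_le (h : IsMultiplicativeWeightsRun K ℓ B T S η y w x)
    (hτ : τ ∈ Icc 1 T) (hT : τ + 1 ≤ T) :
    relativeWeight S η w (τ + 1) ≤ 1 + relativeWeight S η w τ := by
  have hborn : τ + 1 ∈ S (τ + 1) := h.self_mem_active _ (mem_Icc.mpr ⟨by lia, hT⟩)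
  have hsub := h.erase_active_succ_subset τ
  calc relativeWeight S η w (τ + 1)
      = 1 + ∑ j ∈ (S (τ + 1)).erase (τ + 1), w (τ + 1) j / η j := by
        rw [relativeWeight, ← add_sum_erase _ _ hborn, h.weight_self, div_self (h.rate_pos _).ne']
    _ = 1 + ∑ j ∈ (S (τ + 1)).erase (τ + 1),
          w τ j / η j * (1 + η j * roundRegret ℓ x y τ j) := by
        congr 1
        refine sum_congr rfl fun j hj ↦ ?_
        rw [h.weight_succ τ j (hsub hj) (mem_of_mem_erase hj), mul_div_right_comm]
    _ ≤ 1 + ∑ j ∈ S τ, w τ j / η j * (1 + η j * roundRegret ℓ x y τ j) := by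
        gcongr 1 + ?_
        exact sum_le_sum_of_subset_of_nonneg hsub fun j hj _ ↦ h.updated_relativeWeight_nonneg hτ hj
    _ ≤ 1 + relativeWeight S η w τ := by gcongr; exact h.sum_updated_relativeWeight_le hτ

lemma relativeWeight_le (h : IsMultiplicativeWeightsRun K ℓ B T S η y w x) (hτ : τ ∈ Icc 1 T) :
    relativeWeight S η w τ ≤ τ := by
  obtain ⟨h_one, hT⟩ := mem_Icc.mp hτ
  induction τ, h_one using Nat.le_induction with
  | base => simp [relativeWeight, h.active_one hT, h.weight_self, (h.rate_pos 1).ne']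
  | succ τ h_one ih =>
    have hτ' : τ ∈ Icc 1 T := mem_Icc.mpr ⟨h_one, by lia⟩
    push_cast
    linarith [h.relativeWeight_succ_le hτ' hT, ih hτ' (by lia)]

lemma weight_eq_rate_mul_prod (h : IsMultiplicativeWeightsRun K ℓ B T S η y w x) (his : i ≤ s)
    (hactive : ∀ τ ∈ Icc i s, i ∈ S τ) :
    w s i = η i * ∏ τ ∈ Ico i s, (1 + η i * roundRegret ℓ x y τ i) := by
  induction s, his using Nat.le_induction with
  | base => simp [h.weight_self]
  | succ s his ih =>
    rw [h.weight_succ s i (hactive s (by simp; lia)) (hactive (s + 1) (by simp; lia)),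
      ih fun τ hτ ↦ hactive τ (Icc_subset_Icc_right s.le_succ hτ), prod_Ico_succ_top his, mul_assoc]

lemma mem_Icc_horizon (h : IsMultiplicativeWeightsRun K ℓ B T S η y w x) (htT : t ≤ T)
    (hactive : ∀ τ ∈ Icc i t, i ∈ S τ) (hτ : τ ∈ Icc i t) : τ ∈ Icc 1 T := by
  have hi := mem_Icc.mp (h.active_subset τ (hactive τ hτ))
  exact mem_Icc.mpr ⟨hi.1.trans hi.2, (mem_Icc.mp hτ).2.trans htT⟩

lemma prod_one_add_rate_mul_roundRegret_le (h : IsMultiplicativeWeightsRun K ℓ B T S η y w x)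
    (hit : i ≤ t) (htT : t ≤ T) (hactive : ∀ τ ∈ Icc i t, i ∈ S τ) :
    ∏ τ ∈ Icc i t, (1 + η i * roundRegret ℓ x y τ i) ≤ t := by
  have ht : t ∈ Icc i t := right_mem_Icc.mpr hit
  have htT' := h.mem_Icc_horizon htT hactive ht
  calc ∏ τ ∈ Icc i t, (1 + η i * roundRegret ℓ x y τ i)
      = w t i / η i * (1 + η i * roundRegret ℓ x y t i) := by
        rw [h.weight_eq_rate_mul_prod hit hactive, mul_div_cancel_left₀ _ (h.rate_pos i).ne',
          ← prod_Ico_succ_top hit, Ico_add_one_right_eq_Icc]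
    _ ≤ ∑ j ∈ S t, w t j / η j * (1 + η j * roundRegret ℓ x y t j) :=
        single_le_sum (fun j hj ↦ h.updated_relativeWeight_nonneg htT' hj) (hactive t ht)
    _ ≤ relativeWeight S η w t := h.sum_updated_relativeWeight_le htT'
    _ ≤ t := h.relativeWeight_le htT'

lemma rate_mul_sum_roundRegret_le (h : IsMultiplicativeWeightsRun K ℓ B T S η y w x)
    (hit : i ≤ t) (htT : t ≤ T) (hactive : ∀ τ ∈ Icc i t, i ∈ S τ) :
    η i * ∑ τ ∈ Icc i t, roundRegret ℓ x y τ i ≤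
      Real.log t + ∑ τ ∈ Icc i t, (η i * roundRegret ℓ x y τ i) ^ 2 := by
  have hfactor_pos : ∀ τ ∈ Icc i t, 0 < 1 + η i * roundRegret ℓ x y τ i := fun τ hτ ↦
    h.one_add_rate_mul_roundRegret_pos (h.mem_Icc_horizon htT hactive hτ) (hactive τ hτ)
  rw [← sub_le_iff_le_add, mul_sum, ← sum_sub_distrib]
  calc ∑ τ ∈ Icc i t, (η i * roundRegret ℓ x y τ i - (η i * roundRegret ℓ x y τ i) ^ 2)
      ≤ ∑ τ ∈ Icc i t, Real.log (1 + η i * roundRegret ℓ x y τ i) := by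
        refine sum_le_sum fun τ hτ ↦ ?_
        have hlog := abs_log_one_add_sub_self_le_sq <|
          h.abs_rate_mul_roundRegret_le_half (h.mem_Icc_horizon htT hactive hτ) (hactive τ hτ)
        linarith [(abs_le.mp hlog).1]
    _ = Real.log (∏ τ ∈ Icc i t, (1 + η i * roundRegret ℓ x y τ i)) :=
        (Real.log_prod fun τ hτ ↦ (hfactor_pos τ hτ).ne').symm
    _ ≤ Real.log t :=
        Real.log_le_log (prod_pos hfactor_pos)
          (h.prod_one_add_rate_mul_roundRegret_le hit htT hactive)

lemma rate_mul_sum_roundRegret_le_of_bound (h : IsMultiplicativeWeightsRun K ℓ B T S η y w x)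
    (hit : i ≤ t) (htT : t ≤ T) (hactive : ∀ τ ∈ Icc i t, i ∈ S τ) :
    η i * ∑ τ ∈ Icc i t, roundRegret ℓ x y τ i ≤
      Real.log T + (η i * B) ^ 2 * ((t : ℝ) - i + 1) := by
  have ht := mem_Icc.mp (h.mem_Icc_horizon htT hactive (right_mem_Icc.mpr hit))
  have hlog : Real.log t ≤ Real.log T :=
    Real.log_le_log (by exact_mod_cast ht.1) (by exact_mod_cast htT)
  have hsq : ∑ τ ∈ Icc i t, (η i * roundRegret ℓ x y τ i) ^ 2 ≤
      #(Icc i t) • (η i * B) ^ 2 := by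
    refine sum_le_card_nsmul _ _ _ fun τ hτ ↦ ?_
    have hr := h.abs_roundRegret_le (h.mem_Icc_horizon htT hactive hτ) (hactive τ hτ)
    rw [mul_pow, mul_pow]
    exact mul_le_mul_of_nonneg_left (sq_le_sq' (abs_le.mp hr).1 (abs_le.mp hr).2) (sq_nonneg _)
  rw [nsmul_eq_mul, Nat.card_Icc, Nat.cast_sub (by lia)] at hsq
  push_cast at hsq
  linarith [h.rate_mul_sum_roundRegret_le hit htT hactive]

lemma sum_roundRegret_le_mul (h : IsMultiplicativeWeightsRun K ℓ B T S η y w x)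
    (hit : i ≤ t) (htT : t ≤ T) (hactive : ∀ τ ∈ Icc i t, i ∈ S τ) :
    ∑ τ ∈ Icc i t, roundRegret ℓ x y τ i ≤ ((t : ℝ) - i + 1) * B := by
  have hsum := sum_le_card_nsmul (Icc i t) (fun τ ↦ roundRegret ℓ x y τ i) B fun τ hτ ↦
    (abs_le.mp (h.abs_roundRegret_le (h.mem_Icc_horizon htT hactive hτ) (hactive τ hτ))).2
  rw [nsmul_eq_mul, Nat.card_Icc, Nat.cast_sub (by lia)] at hsum
  push_cast at hsum
  linarith

lemma sum_roundRegret_le_of_rate_eq_sqrt (h : IsMultiplicativeWeightsRun K ℓ B T S η y w x)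
    (htT : t ≤ T) (hactive : ∀ τ ∈ Icc i t, i ∈ S τ) {l : ℝ}
    (hrate : η i * B = √(Real.log T / l)) (hit : (1 : ℝ) ≤ t - i)
    (hlo : l / 4 ≤ (t : ℝ) - i) (hhi : (t : ℝ) - i ≤ l) :
    ∑ τ ∈ Icc i t, roundRegret ℓ x y τ i ≤ 3 * B * √(Real.log T * ((t : ℝ) - i)) := by
  have hl : 0 < l := by linarith
  have hit' : i ≤ t := by exact_mod_cast (by linarith : (i : ℝ) ≤ t)
  have hrate_sq : (η i * B) ^ 2 * l = Real.log T := by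
    rw [hrate, Real.sq_sqrt (div_nonneg (Real.log_natCast_nonneg T) hl.le),
      div_mul_cancel₀ _ hl.ne']
  have hsqrt : √(Real.log T * ((t : ℝ) - i)) = η i * B * √(l * ((t : ℝ) - i)) := by
    rw [← hrate_sq, mul_assoc, Real.sqrt_mul (sq_nonneg _),
      Real.sqrt_sq (hrate ▸ Real.sqrt_nonneg _)]
  refine le_of_mul_le_mul_left ?_ (h.rate_pos i)
  calc η i * ∑ τ ∈ Icc i t, roundRegret ℓ x y τ i
      ≤ Real.log T + (η i * B) ^ 2 * ((t : ℝ) - i + 1) :=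
        h.rate_mul_sum_roundRegret_le_of_bound hit' htT hactive
    _ = (η i * B) ^ 2 * (l + ((t : ℝ) - i + 1)) := by rw [← hrate_sq]; ring
    _ ≤ (η i * B) ^ 2 * (3 * √(l * ((t : ℝ) - i))) := by
        gcongr
        exact add_add_one_le_three_mul_sqrt_mul hit hlo hhi
    _ = η i * (3 * B * √(Real.log T * ((t : ℝ) - i))) := by rw [hsqrt]; ring

lemma sum_roundRegret_le_of_half_lt_sqrt (h : IsMultiplicativeWeightsRun K ℓ B T S η y w x)
    (htT : t ≤ T) (hactive : ∀ τ ∈ Icc i t, i ∈ S τ) (hB : 0 ≤ B) {l : ℝ}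
    (hcap : 1 / 2 < √(Real.log T / l)) (hit : (1 : ℝ) ≤ t - i) (hhi : (t : ℝ) - i ≤ l) :
    ∑ τ ∈ Icc i t, roundRegret ℓ x y τ i ≤ 3 * B * √(Real.log T * ((t : ℝ) - i)) := by
  have hit' : i ≤ t := by exact_mod_cast (by linarith : (i : ℝ) ≤ t)
  have hT : (2 : ℝ) ≤ T := by
    have hi := mem_Icc.mp (h.mem_Icc_horizon htT hactive (left_mem_Icc.mpr hit'))
    have hi_one : (1 : ℝ) ≤ i := by exact_mod_cast hi.1
    have htT' : (t : ℝ) ≤ T := by exact_mod_cast htT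
    linarith
  have hl : l ≤ 4 * Real.log T := by
    have hdiv : (1 / 2) ^ 2 < Real.log T / l := (Real.lt_sqrt (by norm_num)).mp hcap
    rw [lt_div_iff₀ (by linarith)] at hdiv
    linarith
  calc ∑ τ ∈ Icc i t, roundRegret ℓ x y τ i ≤ ((t : ℝ) - i + 1) * B :=
        h.sum_roundRegret_le_mul hit' htT hactive
    _ ≤ 3 * √(Real.log T * ((t : ℝ) - i)) * B := by
        gcongr
        exact add_one_le_three_mul_sqrt_mul hit (Real.log_le_log two_pos hT) (hhi.trans hl)
    _ = 3 * B * √(Real.log T * ((t : ℝ) - i)) := by ring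

lemma sum_roundRegret_le_of_lifespanRate (h : IsMultiplicativeWeightsRun K ℓ B T S η y w x)
    (htT : t ≤ T) (hactive : ∀ τ ∈ Icc i t, i ∈ S τ) (hB : 0 < B) {l : ℝ} (hl : 0 < l)
    (hrate : η i = lifespanRate B T l) (hlo : l / 4 ≤ (t : ℝ) - i) (hhi : (t : ℝ) - i ≤ l) :
    ∑ τ ∈ Icc i t, roundRegret ℓ x y τ i ≤ 3 * B * √(Real.log T * ((t : ℝ) - i)) := by
  have hit : (1 : ℝ) ≤ t - i := by
    have hlt : i < t := by exact_mod_cast (by linarith : (i : ℝ) < t)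
    have hle : (i : ℝ) + 1 ≤ t := by exact_mod_cast hlt
    linarith
  rcases le_or_gt √(Real.log T / l) (1 / 2) with hsmall | hcap
  · refine h.sum_roundRegret_le_of_rate_eq_sqrt htT hactive ?_ hit hlo hhi
    rw [hrate, lifespanRate_mul hB.ne', min_eq_right hsmall]
  · exact h.sum_roundRegret_le_of_half_lt_sqrt htT hactive hB.le hcap hit hhi

end IsMultiplicativeWeightsRun

theorem eflh_mw_regret_general {K : Set E} {ℓ : ℕ → E → ℝ} {B : ℝ} {T : ℕ} {S : ℕ → Finset ℕ}
    {η : ℕ → ℝ} {y : ℕ → ℕ → E} {w : ℕ → ℕ → ℝ} {x : ℕ → E}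
    (h : IsMultiplicativeWeightsRun K ℓ B T S η y w x) {i t : ℕ} (htT : t ≤ T)
    (hactive : ∀ τ ∈ Icc i t, i ∈ S τ) (hB : 0 < B) {l : ℝ} (hl : 0 < l)
    (hrate : η i = lifespanRate B T l) (hlo : l / 4 ≤ (t : ℝ) - i) (hhi : (t : ℝ) - i ≤ l) :
    (∑ τ ∈ Icc i t, (ℓ τ (x τ) - ℓ τ (y τ i)) ≤ 3 * B * √(Real.log T * ((t : ℝ) - i))) ∧
      ((∑ τ ∈ Icc i t, ℓ τ (y τ i)) - sInf ((fun u ↦ ∑ τ ∈ Icc i t, ℓ τ u) '' K) ≤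
            3 * B * √((t : ℝ) - i) →
        (∑ τ ∈ Icc i t, ℓ τ (x τ)) - sInf ((fun u ↦ ∑ τ ∈ Icc i t, ℓ τ u) '' K) ≤
          3 * B * √((t : ℝ) - i) + 3 * B * √(Real.log T * ((t : ℝ) - i))) := by
  have hregret : ∑ τ ∈ Icc i t, (ℓ τ (x τ) - ℓ τ (y τ i)) ≤ _ :=
    h.sum_roundRegret_le_of_lifespanRate htT hactive hB hl hrate hlo hhi
  refine ⟨hregret, fun hexpert ↦ ?_⟩
  rw [sum_sub_distrib] at hregret
  linarith

end MultiplicativeWeights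

/-- Lemma 3.4 of the paper: in the Algorithm-1 multiplicative-weights setup,
the regret of the played points against an expert `i` that is alive
throughout `[i, t]`, whose lifespan matches `t - i` up to a factor of 4, is
at most `3GD√(log T · (t - i))`; consequently, if the expert itself has
regret at most `3GD√(t - i)` against the best point of `K` on `[i, t]`, then
the algorithm's regret on `[i, t]` is at most
`3GD√(t - i) + 3GD√(log T · (t - i))`. -/
theorem eflh_mw_regret
    (d T : ℕ) (hT : 2 ≤ T)
    (G D : ℝ) (hG : 0 < G) (hD : 0 < D)
    (K : Set (EuclideanSpace ℝ (Fin d))) (hKconv : Convex ℝ K)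
    (hKcomp : IsCompact K)
    (ℓ : ℕ → EuclideanSpace ℝ (Fin d) → ℝ)
    (hℓconv : ∀ τ ∈ Finset.Icc 1 T, ConvexOn ℝ K (ℓ τ))
    (hℓosc : ∀ τ ∈ Finset.Icc 1 T, ∀ u ∈ K, ∀ v ∈ K, |ℓ τ u - ℓ τ v| ≤ G * D)
    -- active expert sets
    (S : ℕ → Finset ℕ)
    (hS_sub : ∀ τ, S τ ⊆ Finset.Icc 1 τ)
    (hS_mem : ∀ τ ∈ Finset.Icc 1 T, τ ∈ S τ)
    (hS1 : S 1 = {1})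
    (hS_step : ∀ τ, S (τ + 1) ⊆ S τ ∪ {τ + 1})
    -- lifespans and learning rates
    (l : ℕ → ℝ) (hl : ∀ j, 0 < l j)
    (η : ℕ → ℝ)
    (hη : ∀ j, η j = 1 / (G * D) * min (1 / 2) (Real.sqrt (Real.log T / l j)))
    -- expert predictions
    (xp : ℕ → ℕ → EuclideanSpace ℝ (Fin d))
    (hxp : ∀ τ, ∀ j ∈ S τ, xp τ j ∈ K)
    -- weights and played points
    (w : ℕ → ℕ → ℝ)
    (X : ℕ → EuclideanSpace ℝ (Fin d))
    (hX : ∀ τ, X τ = (∑ j ∈ S τ, w τ j)⁻¹ • ∑ j ∈ S τ, w τ j • xp τ j)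
    (hw_init : ∀ j, w j j = η j)
    (hw_rec : ∀ τ, ∀ j ∈ S τ, j ∈ S (τ + 1) →
      w (τ + 1) j = w τ j * (1 + η j * (ℓ τ (X τ) - ℓ τ (xp τ j))))
    -- the expert i and the interval [i, t]
    (i t : ℕ) (hit : i ≤ t) (htT : t + 1 ≤ T)
    (hactive : ∀ τ ∈ Finset.Icc i t, i ∈ S τ)
    (hlife_lo : l i / 4 ≤ (t : ℝ) - (i : ℝ))
    (hlife_hi : (t : ℝ) - (i : ℝ) ≤ l i)
    (hη_small : Real.sqrt (Real.log T / l i) ≤ 1 / 2) :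
    (∑ τ ∈ Finset.Icc i t, (ℓ τ (X τ) - ℓ τ (xp τ i)) ≤
        3 * G * D * Real.sqrt (Real.log T * ((t : ℝ) - (i : ℝ)))) ∧
      ((∑ τ ∈ Finset.Icc i t, ℓ τ (xp τ i)) -
            sInf ((fun x => ∑ τ ∈ Finset.Icc i t, ℓ τ x) '' K) ≤
            3 * G * D * Real.sqrt ((t : ℝ) - (i : ℝ)) →
        (∑ τ ∈ Finset.Icc i t, ℓ τ (X τ)) -
            sInf ((fun x => ∑ τ ∈ Finset.Icc i t, ℓ τ x) '' K) ≤
            3 * G * D * Real.sqrt ((t : ℝ) - (i : ℝ)) +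
              3 * G * D * Real.sqrt (Real.log T * ((t : ℝ) - (i : ℝ)))) := by
  have hB : 0 < G * D := mul_pos hG hD
  have hrun : IsMultiplicativeWeightsRun K ℓ (G * D) T S η xp w X :=
    ⟨hKconv, hℓconv, hℓosc, hS_sub, hS_mem, hS_step,
      fun j ↦ (lifespanRate_pos hB hT (hl j)).trans_eq (hη j).symm,
      fun j ↦ (congrArg (· * _) (hη j)).trans_le (lifespanRate_mul_le_half hB.ne'),
      hxp, hX, hw_init, hw_rec⟩
  simpa only [mul_assoc] using eflh_mw_regret_general hrun (Nat.le_of_succ_le htT) hactive hB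
    (hl i) (hη i) hlife_lo hlife_hi
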